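/- arXiv:2202.08941 — 5 statements merged into one kernel-verified Lean document; each statement's English description precedes it below -/
import Mathlib

section
/- Let G be a negative definite symmetric integer matrix indexed by a finite set V, let v ∈ V, let K be a characteristic vector for G, and let E ⊆ V. Then h_U([K,E]) > (h_U([K+v,E]) + h_U([K−v,E]))/2; in other words, along every v-orbit of cubes the height function h_U is strictly concave. -/
/-!
Translating by `x` and by `-x` moves a vector `L` by `2Gx` and `-2Gx`, so the parallelogram law for
the quadratic form of `G⁻¹` gives `h_U(L + x) + h_U(L - x) = 2 h_U(L) + 2 xᵀGx`
(`hU_chTrans_add_neg`), where `G⁻¹(Gx) = x` because a definite matrix is invertible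
(`isUnit_of_matNegDef`). At `x = e_v` the last term is negative. For cubes, take a vertex
`I ⊆ E` at which the minimum `h_U([K,E])` is attained: the heights of `[K+v,E]` and `[K-v,E]` are
bounded above by their values at the same vertex `I`, and the inequality for vectors applies there.
-/

open Matrix Finset

variable {V : Type*}

/-- Negative definiteness of a symmetric integer matrix, as a quadratic form over `ℚ`. -/
def MatNegDef [Fintype V] (G : Matrix V V ℤ) : Prop :=
  ∀ x : V → ℚ, x ≠ 0 → x ⬝ᵥ (G.map (Int.cast : ℤ → ℚ)).mulVec x < 0

/-- `K` is a characteristic vector for `G`: `K v ≡ G v v (mod 2)` for all `v`. -/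
def IsCharacteristic [Fintype V] (G : Matrix V V ℤ) (K : V → ℤ) : Prop :=
  ∀ v : V, (2 : ℤ) ∣ (K v - G v v)

/-- The translate `K + x` of a characteristic vector by `x : V → ℤ`. -/
def chTrans [Fintype V] (G : Matrix V V ℤ) (K : V → ℤ) (x : V → ℤ) : V → ℤ :=
  fun u => K u + 2 * G.mulVec x u

/-- `i` times the standard basis vector at `v`. -/
def dirVec [DecidableEq V] (v : V) (i : ℤ) : V → ℤ := fun u => if u = v then i else 0

/-- The height function `h_U(K) = (Kᵀ G⁻¹ K + s)/4`. -/
noncomputable def hU [Fintype V] [DecidableEq V] (G : Matrix V V ℤ) (K : V → ℤ) : ℚ :=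
  ((fun u => (K u : ℚ)) ⬝ᵥ ((G.map (Int.cast : ℤ → ℚ))⁻¹).mulVec (fun u => (K u : ℚ))
      + (Fintype.card V : ℚ)) / 4

/-- The height of a cube: `h_U([K,E]) = min_{I ⊆ E} h_U(K + Σ_{v ∈ I} e_v)`. -/
noncomputable def hUcube [Fintype V] [DecidableEq V] (G : Matrix V V ℤ) (K : V → ℤ)
    (E : Finset V) : ℚ :=
  E.powerset.inf' (Finset.powerset_nonempty _)
    (fun I => hU G (chTrans G K (fun u => if u ∈ I then (1 : ℤ) else 0)))

theorem isUnit_of_matNegDef [Fintype V] [DecidableEq V] {G : Matrix V V ℤ} (hneg : MatNegDef G) :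
    IsUnit (G.map (Int.cast : ℤ → ℚ)) := by
  rw [← Matrix.mulVec_injective_iff_isUnit]
  intro x y hxy
  by_contra hne
  have h := hneg (x - y) (sub_ne_zero.mpr hne)
  rw [Matrix.mulVec_sub, show (G.map (Int.cast : ℤ → ℚ)).mulVec x = _ from hxy] at h
  simp at h

/-- The parallelogram law for `h_U`: its second difference in the direction `x` is `2 xᵀGx`. -/
theorem hU_chTrans_add_neg [Fintype V] [DecidableEq V] {G : Matrix V V ℤ} (hneg : MatNegDef G)
    (L x : V → ℤ) :
    hU G (chTrans G L x) + hU G (chTrans G L (-x)) =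
      2 * hU G L + 2 * ((fun u => (x u : ℚ)) ⬝ᵥ
        (G.map (Int.cast : ℤ → ℚ)).mulVec (fun u => (x u : ℚ))) := by
  have hdet := (Matrix.isUnit_iff_isUnit_det _).mp (isUnit_of_matNegDef hneg)
  have hcast : ∀ u, ((G.mulVec x u : ℤ) : ℚ) =
      (G.map (Int.cast : ℤ → ℚ)).mulVec (fun u => (x u : ℚ)) u := by
    intro u
    simp [Matrix.mulVec, dotProduct]
  have hplus : (fun u => ((chTrans G L x u : ℤ) : ℚ)) = (fun u => (L u : ℚ)) +
      (2 : ℚ) • (G.map (Int.cast : ℤ → ℚ)).mulVec (fun u => (x u : ℚ)) := by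
    ext u
    simp [chTrans, hcast]
  have hminus : (fun u => ((chTrans G L (-x) u : ℤ) : ℚ)) = (fun u => (L u : ℚ)) -
      (2 : ℚ) • (G.map (Int.cast : ℤ → ℚ)).mulVec (fun u => (x u : ℚ)) := by
    ext u
    simp [chTrans, Matrix.mulVec_neg, hcast, sub_eq_add_neg]
  unfold hU
  rw [hplus, hminus]
  simp only [Matrix.mulVec_add, Matrix.mulVec_sub, Matrix.mulVec_smul, dotProduct_add,
    add_dotProduct, dotProduct_sub, sub_dotProduct, smul_dotProduct, dotProduct_smul, smul_eq_mul,
    Matrix.mulVec_mulVec, Matrix.nonsing_inv_mul _ hdet, Matrix.one_mulVec]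
  rw [dotProduct_comm (Matrix.mulVec _ _) (fun u => (x u : ℚ))]
  ring

theorem hU_strict_concave [Fintype V] [DecidableEq V] {G : Matrix V V ℤ} (hneg : MatNegDef G)
    (L : V → ℤ) (v : V) :
    hU G (chTrans G L (dirVec v 1)) + hU G (chTrans G L (dirVec v (-1))) < 2 * hU G L := by
  have hdir : (dirVec v (-1) : V → ℤ) = -dirVec v 1 := by
    ext u
    by_cases h : u = v <;> simp [dirVec, h]
  have hne : (fun u => ((dirVec v 1 u : ℤ) : ℚ)) ≠ 0 := by
    intro h
    simpa [dirVec] using congrFun h v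
  rw [hdir, hU_chTrans_add_neg hneg]
  linarith [hneg _ hne]

theorem chTrans_right_comm [Fintype V] (G : Matrix V V ℤ) (K x y : V → ℤ) :
    chTrans G (chTrans G K x) y = chTrans G (chTrans G K y) x := by
  ext u
  simp only [chTrans]
  ring

/-- The height of a cube is at most the height of each of its vertices. -/
theorem hUcube_le [Fintype V] [DecidableEq V] (G : Matrix V V ℤ) (K : V → ℤ) {E I : Finset V}
    (hI : I ∈ E.powerset) :
    hUcube G K E ≤ hU G (chTrans G K (fun u => if u ∈ I then (1 : ℤ) else 0)) :=
  Finset.inf'_le (fun I => hU G (chTrans G K (fun u => if u ∈ I then (1 : ℤ) else 0))) hI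

/-- Lemma `concaveHeight`: along every `v`-orbit of cubes, the height
function `h_U` is strictly concave:
`h_U([K,E]) > (h_U([K+v,E]) + h_U([K−v,E]))/2`. -/
theorem hUcube_strict_concave [Fintype V] [DecidableEq V]
    (G : Matrix V V ℤ) (hsym : G.IsSymm) (hneg : MatNegDef G)
    (K : V → ℤ) (hK : IsCharacteristic G K) (v : V) (E : Finset V) :
    hUcube G K E >
      (hUcube G (chTrans G K (dirVec v 1)) E + hUcube G (chTrans G K (dirVec v (-1))) E) / 2 := by
  obtain ⟨I, hI, hmin⟩ := Finset.exists_mem_eq_inf' (Finset.powerset_nonempty E)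
    (fun I => hU G (chTrans G K (fun u => if u ∈ I then (1 : ℤ) else 0)))
  have hK_eq : hUcube G K E = _ := hmin
  have hplus := hUcube_le G (chTrans G K (dirVec v 1)) hI
  have hminus := hUcube_le G (chTrans G K (dirVec v (-1))) hI
  rw [chTrans_right_comm] at hplus hminus
  have hconc := hU_strict_concave hneg (chTrans G K (fun u => if u ∈ I then (1 : ℤ) else 0)) v
  rw [hK_eq]
  linarith
end

section
/- Let G be a negative definite symmetric integer matrix on a finite set V, let v ∈ V, let K be a characteristic vector, and let E ⊆ V with v ∉ E. Then the function ℤ → ℚ given by i ↦ h_U([K+iv, E]) attains its maximum; moreover, the set of integers at which the maximum is attained has at most two elements, and if it has two elements they are consecutive integers. -/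
/-!
Completing the square in `K ↦ Kᵀ G⁻¹ K` gives `h_U(K + x) = h_U(K) + K · x + xᵀ G x`. Hence, for each
`I ⊆ E`, the height of the vertex of `[K + iv, E]` indexed by `I` is a quadratic polynomial
`c_I + b_I i + G(v,v) i²` whose leading coefficient `G(v,v) < 0` does not depend on `I`
(`hU_cube_vertex`). So `i ↦ h_U([K + iv, E])` is a minimum of finitely many strictly concave
quadratics. It tends to `-∞` in both directions, because each of the quadratics does, and therefore
attains its maximum (`exists_max_inf_quadratic`). It is strictly concave, so an integer strictly
between two maximizers would have a larger value (`no_max_gap_inf_quadratic`).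
-/

open Matrix Finset

variable {V : Type*}

/-- A negative definite integer matrix is invertible over `ℚ`. -/
lemma MatNegDef.isUnit_det [Fintype V] [DecidableEq V] {G : Matrix V V ℤ} (hneg : MatNegDef G) :
    IsUnit (G.map (Int.cast : ℤ → ℚ)).det := by
  rw [isUnit_iff_ne_zero]
  intro h
  obtain ⟨x, hx, hx0⟩ := Matrix.exists_mulVec_eq_zero_iff.mpr h
  have := hneg x hx
  simp [hx0] at this

lemma MatNegDef.diag_neg [Fintype V] [DecidableEq V] {G : Matrix V V ℤ} (hneg : MatNegDef G)
    (v : V) : (G v v : ℚ) < 0 := by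
  have h := hneg (Pi.single v 1) (by simp)
  simpa using h

/-- The change of `h_U` under translation: `h_U(K + x) = h_U(K) + K · x + xᵀ G x`. -/
lemma hU_chTrans [Fintype V] [DecidableEq V] {G : Matrix V V ℤ} (hsym : G.IsSymm)
    (hneg : MatNegDef G) (K x : V → ℤ) :
    hU G (chTrans G K x) = hU G K + ((K ⬝ᵥ x + x ⬝ᵥ G.mulVec x : ℤ) : ℚ) := by
  have hu := hneg.isUnit_det
  set M := G.map (Int.cast : ℤ → ℚ) with hM
  have hMs : Mᵀ = M := by rw [hM, ← Matrix.transpose_map, hsym.eq]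
  set k : V → ℚ := fun u => (K u : ℚ) with hk
  set y : V → ℚ := fun u => (x u : ℚ) with hy
  have hGx : (fun u => ((G.mulVec x u : ℤ) : ℚ)) = M *ᵥ y := by
    funext u
    simp [Matrix.mulVec, dotProduct, hM, hy]
  have hT : (fun u => ((chTrans G K x u : ℤ) : ℚ)) = k + (2 : ℚ) • M *ᵥ y := by
    rw [← hGx]
    funext u
    simp [chTrans, hk]
  have hc : ((K ⬝ᵥ x + x ⬝ᵥ G.mulVec x : ℤ) : ℚ) = k ⬝ᵥ y + y ⬝ᵥ M *ᵥ y := by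
    rw [← hGx]
    simp [dotProduct, hk, hy]
  have hinv : M⁻¹ *ᵥ (M *ᵥ y) = y := by
    rw [Matrix.mulVec_mulVec, Matrix.nonsing_inv_mul _ hu, Matrix.one_mulVec]
  have hcross : (M *ᵥ y) ⬝ᵥ (M⁻¹ *ᵥ k) = k ⬝ᵥ y := by
    rw [← Matrix.vecMul_transpose, hMs, ← Matrix.dotProduct_mulVec, Matrix.mulVec_mulVec,
      Matrix.mul_nonsing_inv _ hu, Matrix.one_mulVec, dotProduct_comm]
  rw [hc]
  unfold hU
  rw [hT, ← hM, ← hk, Matrix.mulVec_add, Matrix.mulVec_smul, hinv]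
  simp only [add_dotProduct, dotProduct_add, smul_dotProduct, dotProduct_smul, hcross, smul_eq_mul]
  rw [dotProduct_comm (M *ᵥ y) y]
  ring

/-- Along the orbit `i ↦ K + iv`, the height of a translate by `y` is a quadratic polynomial in `i`
with leading coefficient `G(v,v)`, independent of `y`. -/
lemma hU_cube_vertex [Fintype V] [DecidableEq V] {G : Matrix V V ℤ} (hsym : G.IsSymm)
    (hneg : MatNegDef G) (K y : V → ℤ) (v : V) (i : ℤ) :
    hU G (chTrans G (chTrans G K (dirVec v i)) y) =
      (hU G K + ((K ⬝ᵥ y + y ⬝ᵥ G.mulVec y : ℤ) : ℚ))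
        + ((K v + 2 * ((fun u => G u v) ⬝ᵥ y) : ℤ) : ℚ) * i + (G v v : ℚ) * i ^ 2 := by
  have hd : dirVec v i = Pi.single v i := by
    funext u
    simp [dirVec, Pi.single_apply]
  have hK' : chTrans G K (dirVec v i) = K + (2 * i) • (fun u => G u v) := by
    funext u
    simp [chTrans, hd, Matrix.mulVec_single]
    ring
  rw [hU_chTrans hsym hneg (chTrans G K (dirVec v i)), hU_chTrans hsym hneg K, hK', hd]
  simp only [add_dotProduct, smul_dotProduct, smul_eq_mul, dotProduct_single, single_dotProduct,
    Matrix.mulVec_single, Pi.smul_apply, MulOpposite.smul_eq_mul_unop, MulOpposite.unop_op,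
    Matrix.col_apply]
  push_cast
  ring

/-- A minimum of finitely many quadratics with a common negative leading coefficient attains its
maximum on `ℤ`. -/
lemma exists_max_inf_quadratic {ι : Type*} (F : Finset ι) (hF : F.Nonempty) (c b : ι → ℚ) {g : ℚ}
    (hg : g < 0) :
    ∃ i₀ : ℤ, ∀ i : ℤ, F.inf' hF (fun I => c I + b I * i + g * (i : ℚ) ^ 2) ≤
      F.inf' hF (fun I => c I + b I * i₀ + g * (i₀ : ℚ) ^ 2) := by
  set f : ℤ → ℚ := fun i => F.inf' hF (fun I => c I + b I * i + g * (i : ℚ) ^ 2) with hf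
  obtain ⟨I, hI⟩ := hF
  have hle : ∀ i : ℤ, f i ≤ c I + b I * i + g * (i : ℚ) ^ 2 := fun i =>
    Finset.inf'_le (fun I => c I + b I * i + g * (i : ℚ) ^ 2) hI
  -- Outside `[-N, N]` a single quadratic is already below `f 0`.
  obtain ⟨N, hN⟩ := exists_nat_gt ((|b I| + |c I - f 0|) / (-g) + 1)
  have hN1 : (1 : ℚ) ≤ N := by
    have : 0 ≤ (|b I| + |c I - f 0|) / (-g) := div_nonneg (by positivity) (by linarith)
    linarith
  have hNg : |b I| + |c I - f 0| < -g * N := by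
    have h : (|b I| + |c I - f 0|) / (-g) < N := by linarith
    rw [div_lt_iff₀ (by linarith)] at h
    linarith
  have hout : ∀ i : ℤ, (N : ℤ) ≤ |i| → f i ≤ f 0 := by
    intro i hi
    have hi' : (N : ℚ) ≤ |(i : ℚ)| := by exact_mod_cast hi
    refine (hle i).trans ?_
    have h1 : b I * i ≤ |b I| * |(i : ℚ)| := by rw [← abs_mul]; exact le_abs_self _
    have h2 := le_abs_self (c I - f 0)
    have h3 : |c I - f 0| ≤ |c I - f 0| * |(i : ℚ)| :=
      le_mul_of_one_le_right (abs_nonneg _) (hN1.trans hi')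
    have h4 : (|b I| + |c I - f 0|) * |(i : ℚ)| ≤ -g * |(i : ℚ)| * |(i : ℚ)| := by
      apply mul_le_mul_of_nonneg_right _ (abs_nonneg _)
      exact hNg.le.trans (mul_le_mul_of_nonneg_left hi' (by linarith))
    have h5 : |(i : ℚ)| * |(i : ℚ)| = (i : ℚ) ^ 2 := by rw [abs_mul_abs_self, sq]
    rw [mul_assoc, h5] at h4
    linarith
  obtain ⟨m, hm, hmax⟩ := Finset.exists_max_image (Finset.Icc (-(N : ℤ)) N) f ⟨0, by simp⟩
  refine ⟨m, fun i => ?_⟩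
  by_cases hi : i ∈ Finset.Icc (-(N : ℤ)) N
  · exact hmax i hi
  · refine (hout i ?_).trans (hmax 0 (by simp))
    by_contra! hlt
    exact hi (Finset.mem_Icc.mpr (abs_le.mp hlt.le))

/-- For a minimum of finitely many quadratics with a common negative leading coefficient, the
successor of one maximizer cannot lie strictly below another maximizer. -/
lemma no_max_gap_inf_quadratic {ι : Type*} (F : Finset ι) (hF : F.Nonempty) (c b : ι → ℚ) {g : ℚ}
    (hg : g < 0) (f : ℤ → ℚ)
    (hf : ∀ i : ℤ, f i = F.inf' hF (fun I => c I + b I * i + g * (i : ℚ) ^ 2))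
    (i j : ℤ) (hi : ∀ k, f k ≤ f i) (hj : ∀ k, f k ≤ f j) : j ≤ i + 1 := by
  by_contra! hlt
  have hij : f j = f i := le_antisymm (hi j) (hj i)
  refine absurd (hi (i + 1)) (not_le.mpr ?_)
  rw [hf (i + 1), Finset.lt_inf'_iff]
  intro I hI
  have hle : ∀ k : ℤ, f k ≤ c I + b I * k + g * (k : ℚ) ^ 2 := fun k => by
    rw [hf k]
    exact Finset.inf'_le (fun I => c I + b I * k + g * (k : ℚ) ^ 2) hI
  have h1 := hle i
  have h2 := hle j
  rw [hij] at h2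
  -- With `d = j - i`, `i + 1` is the convex combination of `i`, `j` with weights `(d-1)/d`, `1/d`.
  obtain ⟨d, hd⟩ : ∃ d : ℚ, d = j - i := ⟨_, rfl⟩
  have hd1 : 1 < d := by
    have : (i : ℚ) + 1 < j := by exact_mod_cast hlt
    linarith
  have hj' : (j : ℚ) = i + d := by linarith
  rw [hj'] at h2
  have h3 := mul_le_mul_of_nonneg_left h1 (show 0 ≤ d - 1 by linarith)
  have h4 : 0 < -g * (d * (d - 1)) := by
    apply mul_pos (by linarith) (mul_pos (by linarith) (by linarith))
  push_cast
  refine lt_of_mul_lt_mul_left ?_ (show 0 ≤ d by linarith)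
  linarith

/-- for `v ∉ E`, the function `i ↦ h_U([K+iv,E])` attains its maximum,
the set of maximizers has at most two elements, and if there are two they are consecutive. -/
theorem hUcube_orbit_max_exists [Fintype V] [DecidableEq V]
    (G : Matrix V V ℤ) (hsym : G.IsSymm) (hneg : MatNegDef G)
    (K : V → ℤ) (hK : IsCharacteristic G K) (v : V) (E : Finset V) (hv : v ∉ E) :
    (∃ i₀ : ℤ, ∀ i : ℤ,
        hUcube G (chTrans G K (dirVec v i)) E ≤ hUcube G (chTrans G K (dirVec v i₀)) E) ∧
    (∀ i j : ℤ,
        (∀ k : ℤ,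
          hUcube G (chTrans G K (dirVec v k)) E ≤ hUcube G (chTrans G K (dirVec v i)) E) →
        (∀ k : ℤ,
          hUcube G (chTrans G K (dirVec v k)) E ≤ hUcube G (chTrans G K (dirVec v j)) E) →
        i = j ∨ i = j + 1 ∨ j = i + 1) := by
  have hg := hneg.diag_neg v
  let y : Finset V → V → ℤ := fun I u => if u ∈ I then (1 : ℤ) else 0
  let c : Finset V → ℚ := fun I => hU G K + ((K ⬝ᵥ y I + y I ⬝ᵥ G.mulVec (y I) : ℤ) : ℚ)
  let b : Finset V → ℚ := fun I => ((K v + 2 * ((fun u => G u v) ⬝ᵥ y I) : ℤ) : ℚ)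
  have hf : ∀ i : ℤ, hUcube G (chTrans G K (dirVec v i)) E =
      E.powerset.inf' (Finset.powerset_nonempty _)
        (fun I => c I + b I * i + (G v v : ℚ) * (i : ℚ) ^ 2) := fun i =>
    Finset.inf'_congr _ rfl fun I _ => hU_cube_vertex hsym hneg K (y I) v i
  constructor
  · simp only [hf]
    exact exists_max_inf_quadratic _ _ c b hg
  · intro i j hi hj
    have h1 := no_max_gap_inf_quadratic _ _ c b hg _ hf i j hi hj
    have h2 := no_max_gap_inf_quadratic _ _ c b hg _ hf j i hj hi
    omega
end

section
/- Let G be a negative definite symmetric integer matrix on a finite set V whose off-diagonal entries lie in {0,1} and whose associated graph is a forest, with an unweighted vertex v₀ attached via ε : V → {0,1} having at most one attaching vertex in each connected component. Let K be a characteristic vector and let v ∈ E ⊆ V. If B_v[K,E] > A_v[K,E] then B_v[K+v₀,E] ≥ A_v[K+v₀,E]; symmetrically, if A_v[K,E] > B_v[K,E] then A_v[K+v₀,E] ≥ B_v[K+v₀,E]. (In the notation of knot lattice homology: if b_v[K,E] > 0 then c_v[K,E] = 0, and if a_v[K,E] > 0 then d_v[K,E] = 0.) -/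
/-!
Write `2 f(K, I) = ∑_{u ∈ I} K u + ∑_{u, w ∈ I} G u w`. Since `K` is characteristic and `G` is
symmetric, this is even, so `f` is integer valued (`fKI_eq_intCast`). Let `C` be the connected
component of `v`. As `G` has no entries linking `C` to its complement, `f` is additive along
`I = (I ∩ C) ∪ (I \ C)` (`fKI_split`). Passing from `K` to `K + v₀` increases `f` on a subset of `C`
by `0` or `1`, because `C` contains at most one attaching vertex (`fKI_knotTrans`,
`sum_eps_mem_Icc`).

If `A < B`, then on the component `C` the minimum over sets avoiding `v` is smaller by at least `1`
than the minimum over sets containing `v`; the translation by `v₀` raises each of the two minima by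
`0` or `1`, so it cannot reverse this order. The parts outside `C` contribute equally to both sides.
The exchange lemma `fKI_exchange` expresses this on sets: swapping the parts of two sets inside `C`
turns a strict inequality for `K` into a weak one for `K + v₀`.
-/

open Matrix Finset

variable {V : Type*}

/-- The translate `K + v₀` by the unweighted vertex, attached via `ε`. -/
def knotTrans (K ε : V → ℤ) : V → ℤ := fun u => K u + 2 * ε u

/-- The second height function `h_V([K,E]) = h_U([K + v₀, E])`. -/
noncomputable def hVcube [Fintype V] [DecidableEq V] (G : Matrix V V ℤ) (ε : V → ℤ)
    (K : V → ℤ) (E : Finset V) : ℚ :=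
  hUcube G (knotTrans K ε) E

/-- `f([K,I]) = ((Σ_{v∈I} K v) + x_Iᵀ G x_I)/2`. -/
noncomputable def fKI [Fintype V] [DecidableEq V] (G : Matrix V V ℤ) (K : V → ℤ)
    (I : Finset V) : ℚ :=
  (((∑ u ∈ I, K u) +
      (fun u => if u ∈ I then (1 : ℤ) else 0) ⬝ᵥ
        G.mulVec (fun u => if u ∈ I then (1 : ℤ) else 0) : ℤ) : ℚ) / 2

/-- `A_v[K,E] = min_{I ⊆ E∖{v}} f([K,I])`. -/
noncomputable def Av [Fintype V] [DecidableEq V] (G : Matrix V V ℤ) (K : V → ℤ)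
    (w : V) (E : Finset V) : ℚ :=
  ((E.erase w).powerset).inf' (Finset.powerset_nonempty _) (fun I => fKI G K I)

/-- `B_v[K,E] = min_{v ∈ I ⊆ E} f([K,I])`. -/
noncomputable def Bv [Fintype V] [DecidableEq V] (G : Matrix V V ℤ) (K : V → ℤ)
    (w : V) (E : Finset V) : ℚ :=
  ((E.erase w).powerset).inf' (Finset.powerset_nonempty _) (fun I => fKI G K (insert w I))

/-- The graph of `G`: an edge between `u ≠ w` exactly when `G u w = 1`. -/
def graphOf (G : Matrix V V ℤ) : SimpleGraph V :=
  SimpleGraph.fromRel (fun u w => G u w = 1)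

/-- The (unique, in a forest) path from `x` to `v` passes through `u`. -/
def onPath (Γ : SimpleGraph V) (x v u : V) : Prop :=
  ∃ p : Γ.Walk x v, p.IsPath ∧ u ∈ p.support

/-- `E_u^v`: the elements of `E` whose path to `v` passes through `u`. -/
noncomputable def Esub (Γ : SimpleGraph V) (E : Finset V) (u v : V) : Finset V :=
  @Finset.filter _ (fun x => onPath Γ x v u) (Classical.decPred _) E


/-- `2 f(K, I)` as an integer, with the quadratic form written as a double sum over `I`. -/
def twoF (G : Matrix V V ℤ) (K : V → ℤ) (I : Finset V) : ℤ :=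
  ∑ u ∈ I, K u + ∑ u ∈ I, ∑ w ∈ I, G u w

lemma fKI_eq [Fintype V] [DecidableEq V] (G : Matrix V V ℤ) (K : V → ℤ) (I : Finset V) :
    fKI G K I = (twoF G K I : ℚ) / 2 := by
  unfold fKI twoF
  simp [dotProduct, mulVec, Finset.sum_ite_mem]

lemma two_dvd_twoF [DecidableEq V] {G : Matrix V V ℤ} (hsym : G.IsSymm) {K : V → ℤ}
    (hK : ∀ v : V, (2 : ℤ) ∣ (K v - G v v)) (I : Finset V) : 2 ∣ twoF G K I := by
  induction I using Finset.induction_on with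
  | empty => simp [twoF]
  | insert a I ha ih =>
    have h : ∑ u ∈ I, G u a = ∑ u ∈ I, G a u :=
      Finset.sum_congr rfl fun u _ => hsym.apply a u
    obtain ⟨c, hc⟩ := ih
    obtain ⟨d, hd⟩ := hK a
    refine ⟨c + d + G a a + ∑ u ∈ I, G a u, ?_⟩
    simp only [twoF, Finset.sum_insert ha, Finset.sum_add_distrib, h] at hc ⊢
    linarith

lemma fKI_eq_intCast [Fintype V] [DecidableEq V] {G : Matrix V V ℤ} (hsym : G.IsSymm) {K : V → ℤ}
    (hK : IsCharacteristic G K) (I : Finset V) : ∃ n : ℤ, fKI G K I = n := by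
  obtain ⟨n, hn⟩ := two_dvd_twoF hsym hK I
  exact ⟨n, by rw [fKI_eq, hn]; push_cast; ring⟩

lemma fKI_union [Fintype V] [DecidableEq V] {G : Matrix V V ℤ} {C : Finset V}
    (hC : ∀ u ∈ C, ∀ w ∉ C, G u w = 0 ∧ G w u = 0) (K : V → ℤ) {X Y : Finset V}
    (hX : X ⊆ C) (hY : Disjoint Y C) : fKI G K (X ∪ Y) = fKI G K X + fKI G K Y := by
  have hd : Disjoint X Y := (hY.mono_right hX).symm
  have hY' : ∀ w ∈ Y, w ∉ C := fun w hw => Finset.disjoint_left.1 hY hw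
  have h1 : ∑ u ∈ X, ∑ w ∈ Y, G u w = 0 :=
    Finset.sum_eq_zero fun u hu => Finset.sum_eq_zero fun w hw =>
      (hC u (hX hu) w (hY' w hw)).1
  have h2 : ∑ u ∈ Y, ∑ w ∈ X, G u w = 0 :=
    Finset.sum_eq_zero fun u hu => Finset.sum_eq_zero fun w hw =>
      (hC w (hX hw) u (hY' u hu)).2
  have : twoF G K (X ∪ Y) = twoF G K X + twoF G K Y := by
    simp only [twoF, Finset.sum_union hd, Finset.sum_add_distrib, h1, h2]
    ring
  rw [fKI_eq, fKI_eq, fKI_eq, this]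
  push_cast
  ring

lemma fKI_split [Fintype V] [DecidableEq V] {G : Matrix V V ℤ} {C : Finset V}
    (hC : ∀ u ∈ C, ∀ w ∉ C, G u w = 0 ∧ G w u = 0) (K : V → ℤ) (I : Finset V) :
    fKI G K I = fKI G K (I ∩ C) + fKI G K (I \ C) := by
  rw [← fKI_union hC K Finset.inter_subset_right Finset.sdiff_disjoint, Finset.union_comm,
    Finset.sdiff_union_inter]

lemma fKI_knotTrans [Fintype V] [DecidableEq V] (G : Matrix V V ℤ) (K ε : V → ℤ) (I : Finset V) :
    fKI G (knotTrans K ε) I = fKI G K I + (∑ u ∈ I, ε u : ℤ) := by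
  rw [fKI_eq, fKI_eq]
  simp only [twoF, knotTrans, Finset.sum_add_distrib, ← Finset.mul_sum]
  push_cast
  ring

lemma sum_eps_mem_Icc {ε : V → ℤ} (hε : ∀ u, ε u = 0 ∨ ε u = 1) {X : Finset V}
    (hX : ∀ u ∈ X, ∀ w ∈ X, ε u = 1 → ε w = 1 → u = w) :
    0 ≤ ∑ u ∈ X, ε u ∧ ∑ u ∈ X, ε u ≤ 1 := by
  refine ⟨Finset.sum_nonneg fun u _ => by rcases hε u with h | h <;> simp [h], ?_⟩
  by_cases h : ∃ a ∈ X, ε a = 1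
  · obtain ⟨a, ha, ha1⟩ := h
    rw [Finset.sum_eq_single_of_mem a ha, ha1]
    intro b hb hba
    exact (hε b).resolve_right fun hb1 => hba (hX b hb a ha hb1 ha1)
  · push Not at h
    rw [Finset.sum_eq_zero fun u hu => (hε u).resolve_right (h u hu)]
    exact zero_le_one

/-- If replacing the part of `I` inside `C` by that of `J` strictly increases `f` for `K`, then
replacing the part of `J` inside `C` by that of `I` does not increase `f` for `K + v₀`. By
additivity both comparisons concern only `I ∩ C` and `J ∩ C`; the gap there is at least `1` for `K`,
and `v₀` changes it by at most `1`. -/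
lemma fKI_exchange [Fintype V] [DecidableEq V] {G : Matrix V V ℤ} (hsym : G.IsSymm)
    {C : Finset V} (hC : ∀ u ∈ C, ∀ w ∉ C, G u w = 0 ∧ G w u = 0)
    {ε : V → ℤ} (hε : ∀ u, ε u = 0 ∨ ε u = 1)
    (hatt : ∀ u ∈ C, ∀ w ∈ C, ε u = 1 → ε w = 1 → u = w)
    {K : V → ℤ} (hK : IsCharacteristic G K) (I J : Finset V)
    (h : fKI G K I < fKI G K (J ∩ C ∪ I \ C)) :
    fKI G (knotTrans K ε) (I ∩ C ∪ J \ C) ≤ fKI G (knotTrans K ε) J := by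
  rw [fKI_union hC K Finset.inter_subset_right Finset.sdiff_disjoint, fKI_split hC K I] at h
  rw [fKI_union hC _ Finset.inter_subset_right Finset.sdiff_disjoint, fKI_split hC _ J,
    fKI_knotTrans G K ε (I ∩ C), fKI_knotTrans G K ε (J ∩ C)]
  have hs : ∀ X : Finset V, 0 ≤ ∑ u ∈ X ∩ C, ε u ∧ ∑ u ∈ X ∩ C, ε u ≤ 1 := fun X =>
    sum_eps_mem_Icc hε fun u hu w hw =>
      hatt u (Finset.mem_inter.1 hu).2 w (Finset.mem_inter.1 hw).2
  obtain ⟨m, hm⟩ := fKI_eq_intCast hsym hK (I ∩ C)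
  obtain ⟨n, hn⟩ := fKI_eq_intCast hsym hK (J ∩ C)
  rw [hm, hn] at h ⊢
  have hmn : m < n := by
    have : (m : ℚ) < n := by linarith
    exact_mod_cast this
  have key : m + ∑ u ∈ I ∩ C, ε u ≤ n + ∑ u ∈ J ∩ C, ε u := by
    have := (hs I).2
    have := (hs J).1
    omega
  have key' : (m : ℚ) + (∑ u ∈ I ∩ C, ε u : ℤ) ≤ n + (∑ u ∈ J ∩ C, ε u : ℤ) := by
    exact_mod_cast key
  linarith

/-- Lemma `v0filteredBigBehavior`: for a negative definite forest with an
unweighted vertex `v₀` having at most one attaching vertex per component, and `v ∈ E`: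
if `B_v[K,E] > A_v[K,E]` then `B_v[K+v₀,E] ≥ A_v[K+v₀,E]` (i.e. if `b_v[K,E] > 0` then
`c_v[K,E] = 0`), and symmetrically if `A_v[K,E] > B_v[K,E]` then `A_v[K+v₀,E] ≥ B_v[K+v₀,E]`
(i.e. if `a_v[K,E] > 0` then `d_v[K,E] = 0`). -/
theorem translate_delta_sign [Fintype V] [DecidableEq V]
    (G : Matrix V V ℤ) (hsym : G.IsSymm) (hneg : MatNegDef G)
    (hoff : ∀ u w : V, u ≠ w → G u w = 0 ∨ G u w = 1)
    (hforest : (graphOf G).IsAcyclic)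
    (ε : V → ℤ) (hε : ∀ u, ε u = 0 ∨ ε u = 1)
    (hatt : ∀ u w : V, ε u = 1 → ε w = 1 → (graphOf G).Reachable u w → u = w)
    (K : V → ℤ) (hK : IsCharacteristic G K) (v : V) (E : Finset V) (hv : v ∈ E) :
    (Av G K v E < Bv G K v E → Av G (knotTrans K ε) v E ≤ Bv G (knotTrans K ε) v E) ∧
    (Bv G K v E < Av G K v E → Bv G (knotTrans K ε) v E ≤ Av G (knotTrans K ε) v E) := by
  classical
  set C : Finset V := Finset.univ.filter fun u => (graphOf G).Reachable v u with hCdef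
  have hmem : ∀ u, u ∈ C ↔ (graphOf G).Reachable v u := by simp [hCdef]
  have hvC : v ∈ C := (hmem v).2 (SimpleGraph.Reachable.refl v)
  have hC : ∀ u ∈ C, ∀ w ∉ C, G u w = 0 ∧ G w u = 0 := by
    intro u hu w hw
    have huw : u ≠ w := fun h => hw (h ▸ hu)
    have h0 : G u w = 0 := (hoff u w huw).resolve_right fun h1 =>
      hw ((hmem w).2 (((hmem u).1 hu).trans
        (SimpleGraph.Adj.reachable (by simp [graphOf, huw, h1]))))
    exact ⟨h0, (hsym.apply u w).trans h0⟩
  have hattC : ∀ u ∈ C, ∀ w ∈ C, ε u = 1 → ε w = 1 → u = w := fun u hu w hw h1 h2 =>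
    hatt u w h1 h2 (((hmem u).1 hu).symm.trans ((hmem w).1 hw))
  -- Membership of `v` in a set is decided by the part of the set inside `C`.
  have hswapA : ∀ X ⊆ E.erase v, ∀ Y ⊆ E.erase v,
      X ∩ C ∪ (insert v Y) \ C ⊆ E.erase v := by
    intro X hX Y hY u hu
    simp only [Finset.mem_union, Finset.mem_inter, Finset.mem_sdiff, Finset.mem_insert] at hu
    rcases hu with ⟨h, -⟩ | ⟨rfl | h, h'⟩
    · exact hX h
    · exact absurd hvC h'
    · exact hY h
  have hswapB : ∀ X ⊆ E.erase v, ∀ Y ⊆ E.erase v,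
      ∃ Z ⊆ E.erase v, insert v Z = (insert v Y) ∩ C ∪ X \ C := by
    intro X hX Y hY
    refine ⟨Y ∩ C ∪ X \ C, ?_, ?_⟩
    · exact Finset.union_subset (Finset.inter_subset_left.trans hY)
        (Finset.sdiff_subset.trans hX)
    · rw [Finset.insert_inter_of_mem hvC, Finset.insert_union]
  have hA : ∀ K' : V → ℤ, ∀ X ⊆ E.erase v, Av G K' v E ≤ fKI G K' X := fun K' X hX =>
    Finset.inf'_le _ (Finset.mem_powerset.2 hX)
  have hB : ∀ K' : V → ℤ, ∀ X ⊆ E.erase v, Bv G K' v E ≤ fKI G K' (insert v X) :=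
    fun K' X hX => Finset.inf'_le (fun I => fKI G K' (insert v I)) (Finset.mem_powerset.2 hX)
  have hA' : ∀ K' : V → ℤ, ∃ X ⊆ E.erase v, Av G K' v E = fKI G K' X := fun K' => by
    obtain ⟨X, hX, h⟩ := Finset.exists_mem_eq_inf' (Finset.powerset_nonempty (E.erase v))
      (fun I => fKI G K' I)
    exact ⟨X, Finset.mem_powerset.1 hX, h⟩
  have hB' : ∀ K' : V → ℤ, ∃ X ⊆ E.erase v, Bv G K' v E = fKI G K' (insert v X) := fun K' => by
    obtain ⟨X, hX, h⟩ := Finset.exists_mem_eq_inf' (Finset.powerset_nonempty (E.erase v))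
      (fun I => fKI G K' (insert v I))
    exact ⟨X, Finset.mem_powerset.1 hX, h⟩
  constructor
  · intro hlt
    obtain ⟨X, hX, hXe⟩ := hA' K
    obtain ⟨Y, hY, hYe⟩ := hB' (knotTrans K ε)
    rw [hYe]
    refine (hA _ _ (hswapA X hX Y hY)).trans
      (fKI_exchange hsym hC hε hattC hK X (insert v Y) ?_)
    obtain ⟨Z, hZ, hZe⟩ := hswapB X hX Y hY
    rw [← hZe, ← hXe]
    exact hlt.trans_le (hB K Z hZ)
  · intro hlt
    obtain ⟨X, hX, hXe⟩ := hB' K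
    obtain ⟨Y, hY, hYe⟩ := hA' (knotTrans K ε)
    rw [hYe]
    obtain ⟨Z, hZ, hZe⟩ := hswapB Y hY X hX
    refine (hB _ Z hZ).trans ?_
    rw [hZe]
    refine fKI_exchange hsym hC hε hattC hK (insert v X) Y ?_
    rw [← hXe]
    exact hlt.trans_le (hA K _ (hswapA Y hY X hX))
end

section
/- For every K ∈ ℤⁿ and E ⊆ {1,…,n}, the set Y_{[K,E]} is contained in the union of the sets Z_{[K',E']} taken over all faces [K',E'] of the cube [K,E]. -/
/-!
Each coordinate of a point `x` of `Y_{[K,E]}` differs by at most `1/4` from that of a point of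
`X_{[K,E]}`, because a single term of the `ℓ¹` sum is bounded by the whole sum. So `x i` lies in
`[K i - 1/4, K i + 1/4]` for `i ∉ E` and in `[K i, K i + 1]` for `i ∈ E`. The latter interval is
covered by `[K i, K i + 1/4]`, `[K i + 1/4, K i + 3/4]` and `[K i + 3/4, K i + 1]`, and the choice
of one of these for every `i ∈ E` determines a face whose `Z`-set contains `x`.
-/

open Finset

/-- The cube `[K,E] ⊆ ℝⁿ`: `x_i = K_i` for `i ∉ E` and `K_i ≤ x_i ≤ K_i + 1` for `i ∈ E`. -/
def cubeKE (n : ℕ) (K : Fin n → ℤ) (E : Finset (Fin n)) : Set (Fin n → ℝ) :=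
  {x | ∀ i, (i ∉ E → x i = (K i : ℝ)) ∧ (i ∈ E → (K i : ℝ) ≤ x i ∧ x i ≤ (K i : ℝ) + 1)}

/-- The center of the cube `[K,E]`. -/
noncomputable def cubeCenter (n : ℕ) (K : Fin n → ℤ) (E : Finset (Fin n)) : Fin n → ℝ :=
  fun i => if i ∈ E then (K i : ℝ) + 1 / 2 else (K i : ℝ)

/-- `X_{[K,E]}`: the part of `[K,E]` within sup-distance `1/4` of its center. -/
def Xset (n : ℕ) (K : Fin n → ℤ) (E : Finset (Fin n)) : Set (Fin n → ℝ) :=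
  {x ∈ cubeKE n K E | ∀ i, |x i - cubeCenter n K E i| ≤ 1 / 4}

/-- `Y_{[K,E]}`: the points within taxicab (ℓ¹) distance `1/4` of `X_{[K,E]}`. -/
def Yset (n : ℕ) (K : Fin n → ℤ) (E : Finset (Fin n)) : Set (Fin n → ℝ) :=
  {x | ∃ y ∈ Xset n K E, ∑ i, |x i - y i| ≤ 1 / 4}

/-- `Z_{[K,E]}`: the points with `|x_i − K_i| ≤ 1/4` for `i ∉ E` and
`|x_i − K_i − 1/2| ≤ 1/4` for `i ∈ E`. -/
def Zset (n : ℕ) (K : Fin n → ℤ) (E : Finset (Fin n)) : Set (Fin n → ℝ) :=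
  {x | ∀ i, (i ∉ E → |x i - (K i : ℝ)| ≤ 1 / 4) ∧
    (i ∈ E → |x i - ((K i : ℝ) + 1 / 2)| ≤ 1 / 4)}

/-- Lemma `YKECovered`: `Y_{[K,E]}` is contained in the union of the sets
`Z_{[K',E']}` over all faces `[K',E']` of the cube `[K,E]`. -/
theorem Yset_subset_union_Zset (n : ℕ) (K : Fin n → ℤ) (E : Finset (Fin n)) :
    Yset n K E ⊆
      ⋃ (E' : Finset (Fin n)) (_ : E' ⊆ E) (S : Finset (Fin n)) (_ : S ⊆ E \ E'),
        Zset n (fun i => K i + if i ∈ S then 1 else 0) E' := by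
  classical
  rintro x ⟨y, ⟨hcube, hy⟩, hsum⟩
  have hxy : ∀ i, |x i - y i| ≤ 1 / 4 := fun i =>
    (single_le_sum (f := fun i => |x i - y i|) (fun j _ => abs_nonneg _) (mem_univ i)).trans hsum
  simp only [Set.mem_iUnion]
  -- The free coordinates of the face are those where `x` is within `1/4` of the center;
  -- the remaining coordinates in `E` are rounded to `K i` or, when in `S`, to `K i + 1`.
  refine ⟨E.filter fun i => |x i - ((K i : ℝ) + 1 / 2)| ≤ 1 / 4, filter_subset _ _,
    E.filter fun i => (K i : ℝ) + 3 / 4 < x i, ?_, ?_⟩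
  · intro i hi
    simp only [mem_filter, mem_sdiff, abs_le] at hi ⊢
    refine ⟨hi.1, fun h => ?_⟩
    linarith [hi.2, h.2.2]
  · intro i
    have h1 := abs_le.1 (hxy i)
    have h2 := abs_le.1 (hy i)
    simp only [cubeCenter] at h2
    simp only [mem_filter, abs_le]
    by_cases hE : i ∈ E
    · simp only [hE, if_true, true_and] at h2 ⊢
      by_cases hS : (K i : ℝ) + 3 / 4 < x i
      · simp only [hS, if_true]
        push_cast
        refine ⟨fun _ => ⟨by linarith, by linarith⟩, fun h => ?_⟩
        linarith [h.2]
      · simp only [hS, if_false, add_zero]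
        refine ⟨fun h => ⟨by linarith, ?_⟩, id⟩
        by_contra hlt
        exact h ⟨by linarith, by linarith⟩
    · have h3 := (hcube i).1 hE
      simp only [hE, if_false, false_and, add_zero] at h2 ⊢
      exact ⟨fun _ => ⟨by linarith, by linarith⟩, fun h => h.elim⟩
end

section
/- Let [K,E] and [K',E'] be distinct cubes in ℝⁿ (that is, (K,E) ≠ (K',E')) of the same dimension |E| = |E'|. Then every point of X_{[K,E]} has ℓ¹ (taxicab) distance at least 1/2 from X_{[K',E']}; consequently the interiors of Y_{[K,E]} and Y_{[K',E']} are disjoint. -/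
/-!
The two sets `X` are separated by a linear functional `f(x) = ∑ aᵢ xᵢ` with `a ≠ 0` and all
`|aᵢ| ≤ 1`: one has `f(x) + 1/2 ≤ f(y)` for `x ∈ X_{[K,E]}` and `y ∈ X_{[K',E']}`. If `E = E'`,
some coordinate has `Kᵢ ≠ K'ᵢ`, and `f = ±xᵢ` works. If `E ≠ E'`, equality of the cardinalities
gives `i ∈ E \ E'` and `j ∈ E' \ E`; in each of these two coordinates one set is confined to an
integer and the other to `[m + 1/4, m + 3/4]`, so `f = ±xᵢ ± xⱼ` gains `1/4` from each.

Since `f` is `1`-Lipschitz for the taxicab norm, the distance bound follows, and `f` on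
`Y_{[K,E]}` never exceeds `f` on `Y_{[K',E']}`. A common interior point `p` is then impossible:
`p + ε a` still lies in `Y_{[K,E]}` for small `ε > 0`, while `f(p + ε a) > f(p)`.
-/

open Finset

theorem Xset_notMem {n : ℕ} {K : Fin n → ℤ} {E : Finset (Fin n)} {x : Fin n → ℝ}
    (hx : x ∈ Xset n K E) {i : Fin n} (hi : i ∉ E) : x i = K i :=
  (hx.1 i).1 hi

theorem Xset_mem {n : ℕ} {K : Fin n → ℤ} {E : Finset (Fin n)} {x : Fin n → ℝ}
    (hx : x ∈ Xset n K E) {i : Fin n} (hi : i ∈ E) :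
    (K i : ℝ) + 1 / 4 ≤ x i ∧ x i ≤ (K i : ℝ) + 3 / 4 := by
  have h := hx.2 i
  simp only [cubeCenter, if_pos hi] at h
  rw [abs_le] at h
  constructor <;> linarith [h.1, h.2]

/-- In a direction of `E` that is not one of `E'`, the `X`-sets are `1/4` apart, always on the
same side. -/
theorem coord_gap {n : ℕ} {K K' : Fin n → ℤ} {E E' : Finset (Fin n)} {i : Fin n}
    (hi : i ∈ E) (hi' : i ∉ E') :
    ∃ s : ℝ, |s| = 1 ∧ ∀ x ∈ Xset n K E, ∀ y ∈ Xset n K' E', 1 / 4 ≤ s * (y i - x i) := by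
  rcases le_or_gt (K' i) (K i) with h | h
  · refine ⟨-1, by simp, fun x hx y hy => ?_⟩
    have h' : (K' i : ℝ) ≤ K i := by exact_mod_cast h
    linarith [Xset_notMem hy hi', (Xset_mem hx hi).1]
  · refine ⟨1, by simp, fun x hx y hy => ?_⟩
    have h' : (K i : ℝ) + 1 ≤ K' i := by exact_mod_cast h
    linarith [Xset_notMem hy hi', (Xset_mem hx hi).2]

/-- For parallel cubes, the `X`-sets are `1/2` apart in any coordinate where the base points
differ. -/
theorem coord_gap_of_lt {n : ℕ} {K K' : Fin n → ℤ} {E : Finset (Fin n)} {i : Fin n}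
    (h : K i < K' i) {x y : Fin n → ℝ} (hx : x ∈ Xset n K E) (hy : y ∈ Xset n K' E) :
    1 / 2 ≤ y i - x i := by
  have h' : (K i : ℝ) + 1 ≤ K' i := by exact_mod_cast h
  by_cases hi : i ∈ E
  · linarith [(Xset_mem hx hi).2, (Xset_mem hy hi).1]
  · linarith [Xset_notMem hx hi, Xset_notMem hy hi]

theorem exists_separating {n : ℕ} {K K' : Fin n → ℤ} {E E' : Finset (Fin n)}
    (hne : (K, E) ≠ (K', E')) (hdim : E.card = E'.card) :
    ∃ a : Fin n → ℝ, a ≠ 0 ∧ (∀ i, |a i| ≤ 1) ∧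
      ∀ x ∈ Xset n K E, ∀ y ∈ Xset n K' E', 1 / 2 ≤ ∑ i, a i * (y i - x i) := by
  have single (i : Fin n) (s : ℝ) (hs : |s| = 1)
      (h : ∀ x ∈ Xset n K E, ∀ y ∈ Xset n K' E', 1 / 2 ≤ s * (y i - x i)) :
      ∃ a : Fin n → ℝ, a ≠ 0 ∧ (∀ i, |a i| ≤ 1) ∧
        ∀ x ∈ Xset n K E, ∀ y ∈ Xset n K' E', 1 / 2 ≤ ∑ i, a i * (y i - x i) := by
    refine ⟨Pi.single i s, ?_, fun k => ?_, fun x hx y hy => ?_⟩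
    · rw [Ne, Pi.single_eq_zero_iff]
      rintro rfl
      simp at hs
    · by_cases hk : k = i
      · subst hk; simp [hs]
      · simp [hk]
    · simpa [Pi.single_apply] using h x hx y hy
  by_cases hE : E = E'
  · subst hE
    obtain ⟨i, hi⟩ : ∃ i, K i ≠ K' i := by
      by_contra! h
      exact hne (by rw [funext h])
    rcases lt_or_gt_of_ne hi with h | h
    · exact single i 1 (by simp) fun x hx y hy => by
        linarith [coord_gap_of_lt h hx hy]
    · exact single i (-1) (by simp) fun x hx y hy => by
        linarith [coord_gap_of_lt h hy hx]
  · obtain ⟨i, hi, hi'⟩ := Finset.not_subset.1 fun h =>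
      hE (Finset.eq_of_subset_of_card_le h hdim.ge)
    obtain ⟨j, hj', hj⟩ := Finset.not_subset.1 fun h =>
      hE (Finset.eq_of_subset_of_card_le h hdim.le).symm
    have hij : i ≠ j := fun h => hj (h ▸ hi)
    obtain ⟨s, hs, hsgap⟩ := coord_gap (K := K) (K' := K') hi hi'
    obtain ⟨t, ht, htgap⟩ := coord_gap (K := K') (K' := K) hj' hj
    refine ⟨Pi.single i s - Pi.single j t, fun h => ?_, fun k => ?_, fun x hx y hy => ?_⟩
    · have := congrFun h i
      simp [hij] at this
      simp [this] at hs
    · by_cases hki : k = i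
      · subst hki; simp [hij, hs]
      · by_cases hkj : k = j
        · subst hkj; simp [hki, ht]
        · simp [hki, hkj]
    · have h : ∑ k, (Pi.single i s - Pi.single j t : Fin n → ℝ) k * (y k - x k)
          = s * (y i - x i) - t * (y j - x j) := by
        simp [sub_mul, Finset.sum_sub_distrib, Pi.single_apply]
      rw [h]
      -- `t` bounds `xⱼ - yⱼ`, the opposite difference, hence its minus sign
      linarith [hsgap x hx y hy, htgap y hy x hx]

theorem sum_mul_le_l1 {n : ℕ} {a : Fin n → ℝ} (ha : ∀ i, |a i| ≤ 1) (v : Fin n → ℝ) :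
    ∑ i, a i * v i ≤ ∑ i, |v i| :=
  Finset.sum_le_sum fun i _ => (le_abs_self _).trans <| by
    rw [abs_mul]
    exact mul_le_of_le_one_left (abs_nonneg _) (ha i)

/-- Lemma `YKEdisjoint`: distinct cubes of the same dimension have
`X`-sets at taxicab distance at least `1/2` from each other; consequently the interiors of
the corresponding `Y`-sets are disjoint. -/
theorem Xset_separated_and_Yset_interiors_disjoint (n : ℕ)
    (K K' : Fin n → ℤ) (E E' : Finset (Fin n))
    (hne : (K, E) ≠ (K', E')) (hdim : E.card = E'.card) :
    (∀ x ∈ Xset n K E, ∀ y ∈ Xset n K' E', (1 : ℝ) / 2 ≤ ∑ i, |x i - y i|) ∧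
    interior (Yset n K E) ∩ interior (Yset n K' E') = ∅ := by
  obtain ⟨a, ha0, ha, hsep⟩ := exists_separating hne hdim
  refine ⟨fun x hx y hy => ?_, ?_⟩
  · refine (hsep x hx y hy).trans ((sum_mul_le_l1 ha (fun i => y i - x i)).trans_eq ?_)
    simp only [abs_sub_comm]
  · rw [Set.eq_empty_iff_forall_notMem]
    rintro p ⟨hp, hp'⟩
    obtain ⟨y, hy, hpy⟩ := interior_subset hp'
    have hcont : Filter.Tendsto (fun ε : ℝ => p + ε • a) (nhdsWithin 0 (Set.Ioi 0)) (nhds p) := by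
      have h : Continuous fun ε : ℝ => p + ε • a := by fun_prop
      simpa using (h.tendsto 0).mono_left nhdsWithin_le_nhds
    obtain ⟨ε, ⟨x, hx, hpx⟩, hε⟩ := ((hcont.eventually
      (mem_interior_iff_mem_nhds.1 hp)).and self_mem_nhdsWithin).exists
    have hε : 0 < ε := hε
    have h1 := hsep x hx y hy
    have h2 := sum_mul_le_l1 ha (fun i => (p + ε • a) i - x i)
    have h3 := sum_mul_le_l1 ha (fun i => y i - p i)
    simp only [abs_sub_comm (p _) (y _)] at hpy
    have hpos : 0 < ∑ i, a i * a i := by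
      obtain ⟨i, hi⟩ := Function.ne_iff.1 ha0
      exact Finset.sum_pos' (fun _ _ => mul_self_nonneg _)
        ⟨i, Finset.mem_univ i, mul_self_pos.2 hi⟩
    have key : ∑ i, a i * ((p + ε • a) i - x i) + ∑ i, a i * (y i - p i)
        = ∑ i, a i * (y i - x i) + ε * ∑ i, a i * a i := by
      rw [Finset.mul_sum, ← Finset.sum_add_distrib, ← Finset.sum_add_distrib]
      refine Finset.sum_congr rfl fun i _ => ?_
      simp only [Pi.add_apply, Pi.smul_apply, smul_eq_mul]
      ring
    linarith [mul_pos hε hpos]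
end
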